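/- arXiv:1002.2802 — 3 statements merged into one kernel-verified Lean document; each statement's English description precedes it below -/
import Mathlib

section
/- For abelian groups G₀ and G₁ and a prime p, the torsion product Tor₁^ℤ(G₀, G₁) contains an element of order p if and only if both G₀ and G₁ contain elements of order p. -/
open CategoryTheory

/-!
Let `0 → K → F → N → 0` be exact with `F` projective, so that `Tor₁(M, N)` is the kernel of
`M ⊗ K → M ⊗ F`. Over a Dedekind domain `K` is flat.

If `p` acts injectively on `M`, it does so on `M ⊗ K`, hence on `Tor₁(M, N)`. If `p` acts
injectively on `N`, then `k ↦ (k, p k)` embeds `K` into `F × K` with flat cokernel, so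
`M ⊗ K → (M ⊗ F) × (M ⊗ K)` is injective as well, which says that no nonzero element of
`Tor₁(M, N)` is killed by `p`.

Conversely, let `x ∈ M` and `y ∈ N` be nonzero and killed by `p`, and lift `y` to `a ∈ F`. Then
`p a ∈ K`, and `x ⊗ p a` is killed by `p` and vanishes in `M ⊗ F`. It is nonzero in `M ⊗ K`: as
`R x ≅ R ⧸ p`, it could only vanish if `p a ∈ p K`, that is, if `a ∈ K`.
-/

universe u

theorem not_isSMulRegular_iff_exists_ne_zero_smul_eq_zero {R M : Type*} [AddGroup M]
    [DistribSMul R M] {r : R} : ¬ IsSMulRegular M r ↔ ∃ x : M, x ≠ 0 ∧ r • x = 0 := by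
  simp only [isSMulRegular_iff_right_eq_zero_of_smul, not_forall, exists_prop, and_comm, ne_eq]

section Flat

open TensorProduct LinearMap

variable {R M K F N : Type*} [CommRing R] [AddCommGroup M] [Module R M] [AddCommGroup K]
  [Module R K] [AddCommGroup F] [Module R F] [AddCommGroup N] [Module R N]

theorem tmul_eq_zero_iff_mem_torsionOf_smul_top [Module.Flat R K] {x : M} {k : K} :
    x ⊗ₜ[R] k = 0 ↔ k ∈ Ideal.torsionOf R M x • (⊤ : Submodule R K) := by
  let e := Ideal.quotTorsionOfEquivSpanSingleton R M x
  let φ : (R ⧸ Ideal.torsionOf R M x) →ₗ[R] M := (R ∙ x).subtype ∘ₗ e.toLinearMap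
  have hφ : Function.Injective (φ.rTensor K) :=
    Module.Flat.rTensor_preserves_injective_linearMap φ
      ((R ∙ x).subtype_injective.comp e.injective)
  have hφ_one : φ 1 = x := one_smul R x
  calc x ⊗ₜ[R] k = 0
      ↔ φ.rTensor K (1 ⊗ₜ k) = 0 := by rw [rTensor_tmul, hφ_one]
    _ ↔ (1 : R ⧸ Ideal.torsionOf R M x) ⊗ₜ[R] k = 0 := map_eq_zero_iff _ hφ
    _ ↔ k ∈ Ideal.torsionOf R M x • (⊤ : Submodule R K) := by
      rw [← (quotTensorEquivQuotSMul K (Ideal.torsionOf R M x)).map_eq_zero_iff,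
        quotTensorEquivQuotSMul_mk_one_tmul, Submodule.Quotient.mk_eq_zero]

theorem torsionOf_eq_span_singleton_of_isMaximal {p : R} (hp : (Ideal.span {p}).IsMaximal) {x : M}
    (hx : x ≠ 0) (hpx : p • x = 0) : Ideal.torsionOf R M x = Ideal.span {p} :=
  (hp.eq_of_le (mt (Ideal.torsionOf_eq_top_iff _ x).1 hx)
    ((Ideal.span_singleton_le_iff_mem _).2 hpx)).symm

variable {f : K →ₗ[R] F} {g : F →ₗ[R] N}

theorem not_isSMulRegular_ker_lTensor [Module.Flat R K] (hfg : Function.Exact f g)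
    (hg : Function.Surjective g) {p : R} (hp : (Ideal.span {p}).IsMaximal)
    (hF : IsSMulRegular F p) (hM : ¬ IsSMulRegular M p) (hN : ¬ IsSMulRegular N p) :
    ¬ IsSMulRegular (ker (f.lTensor M)) p := by
  rw [not_isSMulRegular_iff_exists_ne_zero_smul_eq_zero] at hM hN
  obtain ⟨x, hx, hpx⟩ := hM
  obtain ⟨y, hy, hpy⟩ := hN
  obtain ⟨a, rfl⟩ := hg y
  obtain ⟨k, hk⟩ : ∃ k, f k = p • a := (hfg _).1 (by rw [map_smul, hpy])
  have hxk : x ⊗ₜ[R] k ∈ ker (f.lTensor M) := by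
    rw [mem_ker, lTensor_tmul, hk, ← smul_tmul, hpx, zero_tmul]
  have hpxk : p • (x ⊗ₜ[R] k) = 0 := by rw [smul_tmul', hpx, zero_tmul]
  intro hreg
  have hxk_zero : x ⊗ₜ[R] k = 0 :=
    (isSMulRegular_submodule_iff_right_eq_zero_of_smul _ _).1 hreg _ hxk hpxk
  obtain ⟨k', rfl⟩ : ∃ k', p • k' = k := by
    rw [tmul_eq_zero_iff_mem_torsionOf_smul_top, torsionOf_eq_span_singleton_of_isMaximal hp hx hpx,
      Submodule.ideal_span_singleton_smul, Submodule.mem_smul_pointwise_iff_exists] at hxk_zero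
    simpa using hxk_zero
  have hk' : f k' = a := hF (by simpa using hk)
  exact hy (by rw [← hk', hfg.apply_apply_eq_zero])

end Flat

section Dedekind

open TensorProduct LinearMap

variable {R M K F N : Type*} [CommRing R] [IsDedekindDomain R] [AddCommGroup M] [Module R M]
  [AddCommGroup K] [Module R K] [AddCommGroup F] [Module R F] [Module.IsTorsionFree R F]
  [AddCommGroup N] [Module R N] {f : K →ₗ[R] F} {g : F →ₗ[R] N}

theorem lTensor_prod_lsmul_injective (hf : Function.Injective f) (hfg : Function.Exact f g)
    {r : R} (hN : IsSMulRegular N r) :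
    Function.Injective ((f.prod (lsmul R K r)).lTensor M) := by
  let ψ : F × K →ₗ[R] F := (lsmul R F r).coprod (-f)
  have hψ (a : F) (k : K) : ψ (a, k) = 0 ↔ r • a = f k := by
    simp [ψ, add_neg_eq_zero]
  have hexact : Function.Exact (f.prod (lsmul R K r)) ψ := by
    rintro ⟨a, k⟩
    rw [hψ]
    constructor
    · intro hak
      have hga : g a = 0 := hN.right_eq_zero_of_smul
        (by rw [← map_smul, hak, hfg.apply_apply_eq_zero])
      obtain ⟨k', rfl⟩ := (hfg a).1 hga
      exact ⟨k', Prod.ext rfl (hf (by simpa using hak))⟩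
    · rintro ⟨k', hk'⟩
      obtain ⟨rfl, rfl⟩ := Prod.mk.inj hk'
      simp
  exact lTensor_injective_of_exact_of_flat ψ.rangeRestrict ψ.surjective_rangeRestrict _
    (fun _ _ h => hf (congrArg Prod.fst h)) (fun z => Subtype.ext_iff.trans (hexact z)) M

theorem isSMulRegular_ker_lTensor_of_isSMulRegular_right (hf : Function.Injective f)
    (hfg : Function.Exact f g) {r : R} (hN : IsSMulRegular N r) :
    IsSMulRegular (ker (f.lTensor M)) r := by
  refine (isSMulRegular_submodule_iff_right_eq_zero_of_smul _ _).2 fun t ht hrt => ?_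
  have hsum : f.prod (lsmul R K r) = inl R F K ∘ₗ f + r • inr R F K := by ext <;> simp
  refine lTensor_prod_lsmul_injective (M := M) hf hfg hN ?_
  rw [map_zero, hsum, lTensor_add, lTensor_comp, lTensor_smul, LinearMap.add_apply,
    LinearMap.comp_apply, mem_ker.1 ht, map_zero, zero_add, LinearMap.smul_apply, ← map_smul, hrt,
    map_zero]

theorem isSMulRegular_ker_lTensor_iff (hf : Function.Injective f) (hfg : Function.Exact f g)
    (hg : Function.Surjective g) {p : R} (hp : Prime p) :
    IsSMulRegular (ker (f.lTensor M)) p ↔ IsSMulRegular M p ∨ IsSMulRegular N p := by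
  have : Module.IsTorsionFree R K := hf.moduleIsTorsionFree f f.map_smul
  have hmax : (Ideal.span {p}).IsMaximal :=
    ((Ideal.span_singleton_prime hp.ne_zero).2 hp).isMaximal
      (mt Ideal.span_singleton_eq_bot.1 hp.ne_zero)
  refine ⟨fun h => ?_, ?_⟩
  · by_contra! hMN
    exact not_isSMulRegular_ker_lTensor hfg hg hmax (.of_ne_zero hp.ne_zero) hMN.1 hMN.2 h
  · rintro (hM | hN)
    · exact hM.rTensor K |>.submodule _ _
    · exact isSMulRegular_ker_lTensor_of_isSMulRegular_right hf hfg hN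

end Dedekind

/-- The homology of a complex `X₁ → X₂ → X₃` whose second map factors as `ι ∘ π` through a cokernel
`π : X₂ → Q` of the first is the kernel of `ι`. -/
noncomputable def homologyLinearEquivKer {R : Type*} [CommRing R] (S : ShortComplex (ModuleCat R))
    {Q : Type*} [AddCommGroup Q] [Module R Q] {π : S.X₂ →ₗ[R] Q} {ι : Q →ₗ[R] S.X₃}
    (hπ : Function.Surjective π) (hfπ : Function.Exact S.f.hom π) (hg : ι ∘ₗ π = S.g.hom) :
    S.homology ≃ₗ[R] LinearMap.ker ι :=
  let π' : LinearMap.ker S.g.hom →ₗ[R] LinearMap.ker ι :=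
    π.restrict fun z hz => by rwa [← hg] at hz
  have hπ' : Function.Surjective π' := by
    rintro ⟨t, ht⟩
    obtain ⟨z, rfl⟩ := hπ t
    exact ⟨⟨z, by rwa [← hg]⟩, rfl⟩
  have hker : LinearMap.range S.moduleCatToCycles = LinearMap.ker π' := by
    ext z
    simp only [LinearMap.mem_range, LinearMap.mem_ker, Subtype.ext_iff]
    exact (hfπ z).symm
  S.moduleCatHomologyIso.toLinearEquiv ≪≫ₗ Submodule.quotEquivOfEq _ _ hker ≪≫ₗ
    π'.quotKerEquivOfSurjective hπ'

/-- For a projective resolution `P` of `N`, the module `Tor₁(M, N)` is the kernel of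
`M ⊗ K → M ⊗ P₀`, where `K` is the kernel of the augmentation `P₀ → N`. -/
noncomputable def torOneLinearEquivKer {R : Type u} [CommRing R] (M : ModuleCat.{u} R)
    {N : ModuleCat.{u} R} (P : ProjectiveResolution N) :
    ((Tor (ModuleCat R) 1).obj M).obj N ≃ₗ[R]
      LinearMap.ker ((LinearMap.ker (P.π.f 0).hom).subtype.lTensor M) :=
  let T := (MonoidalCategory.tensoringLeft (ModuleCat R)).obj M
  let C := (T.mapHomologicalComplex _).obj P.complex
  have hd : Function.Exact (P.complex.d 2 1).hom (P.complex.d 1 0).hom :=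
    (ShortComplex.ShortExact.moduleCat_exact_iff_function_exact _).1 (P.exact_succ 0)
  have hπ : Function.Exact (P.complex.d 1 0).hom (P.π.f 0).hom :=
    (ShortComplex.ShortExact.moduleCat_exact_iff_function_exact _).1 P.exact₀
  let d' : P.complex.X 1 →ₗ[R] LinearMap.ker (P.π.f 0).hom :=
    (P.complex.d 1 0).hom.codRestrict _ hπ.apply_apply_eq_zero
  have hd' : Function.Surjective d' := fun ⟨a, ha⟩ =>
    let ⟨b, hb⟩ := (hπ a).1 ha
    ⟨b, Subtype.ext hb⟩
  have hdd' : Function.Exact (P.complex.d 2 1).hom d' := fun b => Subtype.ext_iff.trans (hd b)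
  (P.isoLeftDerivedObj T 1 ≪≫
    ShortComplex.homologyMapIso (C.isoSc' 2 1 0 (by simp) (by simp))).toLinearEquiv ≪≫ₗ
      homologyLinearEquivKer (C.sc' 2 1 0) (LinearMap.lTensor_surjective M hd')
        (lTensor_exact M hdd' hd') (LinearMap.lTensor_comp M _ _).symm

theorem stmt3_general {R : Type u} [CommRing R] [IsDedekindDomain R] (M N : Type u)
    [AddCommGroup M] [Module R M] [AddCommGroup N] [Module R N] {p : R} (hp : Prime p) :
    (∃ x : ((Tor (ModuleCat R) 1).obj (ModuleCat.of R M)).obj (ModuleCat.of R N),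
        x ≠ 0 ∧ p • x = 0) ↔
      ((∃ x : M, x ≠ 0 ∧ p • x = 0) ∧ (∃ y : N, y ≠ 0 ∧ p • y = 0)) := by
  obtain ⟨P⟩ := HasProjectiveResolution.out (Z := ModuleCat.of R N)
  have : Module.Projective R (P.complex.X 0) :=
    (IsProjective.iff_projective _).2 (P.projective 0)
  have hπ : Function.Surjective (P.π.f 0).hom :=
    (ModuleCat.epi_iff_surjective _).1 inferInstance
  have hreg : IsSMulRegular (((Tor (ModuleCat R) 1).obj (ModuleCat.of R M)).obj
      (ModuleCat.of R N)) p ↔ IsSMulRegular M p ∨ IsSMulRegular N p :=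
    ((torOneLinearEquivKer (ModuleCat.of R M) P).isSMulRegular_congr p).trans <|
      isSMulRegular_ker_lTensor_iff (Submodule.subtype_injective _)
        (LinearMap.exact_subtype_ker_map _) hπ hp
  simp only [← not_isSMulRegular_iff_exists_ne_zero_smul_eq_zero, hreg, not_or]

/-- For abelian groups `G₀`, `G₁` and a prime `p`, the torsion product `Tor₁^ℤ(G₀, G₁)` contains
an element of order `p` iff both `G₀` and `G₁` contain elements of order `p`. -/
theorem stmt3 (G₀ G₁ : Type) [AddCommGroup G₀] [AddCommGroup G₁] (p : ℕ) (hp : p.Prime) :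
    (∃ x : ((Tor (ModuleCat ℤ) 1).obj (ModuleCat.of ℤ G₀)).obj (ModuleCat.of ℤ G₁),
        x ≠ 0 ∧ p • x = 0) ↔
      ((∃ x : G₀, x ≠ 0 ∧ p • x = 0) ∧ (∃ y : G₁, y ≠ 0 ∧ p • y = 0)) := by
  simpa only [Nat.cast_smul_eq_nsmul] using
    stmt3_general G₀ G₁ (Nat.prime_iff_prime_int.1 hp)
end

section
/- For abelian groups G and H, the tensor product G ⊗ H is trivial if and only if G ⊗ B is trivial for every group B in the Bockstein family σ(H). -/
open TensorProduct

/-- The `p`-torsion part of an abelian group. -/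
def pTorsion (p : ℕ) (G : Type) [AddCommGroup G] : AddSubgroup G where
  carrier := {x | ∃ k : ℕ, p ^ k • x = 0}
  zero_mem' := ⟨0, smul_zero _⟩
  add_mem' := by
    rintro a b ⟨k, hk⟩ ⟨l, hl⟩
    refine ⟨k + l, ?_⟩
    have ha : p ^ (k + l) • a = 0 := by
      rw [pow_add, mul_nsmul, hk, smul_zero]
    have hb : p ^ (k + l) • b = 0 := by
      rw [pow_add, mul_comm, mul_nsmul, hl, smul_zero]
    rw [smul_add, ha, hb, add_zero]
  neg_mem' := by
    rintro a ⟨k, hk⟩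
    exact ⟨k, by rw [smul_neg, hk, neg_zero]⟩

/-- An abelian group is divisible by `n` if every element is an `n`-th multiple. -/
def DivisibleByNat (H : Type) [AddCommGroup H] (n : ℕ) : Prop :=
  ∀ x : H, ∃ y : H, n • y = x

/-- `ℚ ∈ σ(G)` iff `G/Tor(G)` is nonzero and divisible. -/
def QInSigma (G : Type) [AddCommGroup G] : Prop :=
  Nontrivial (G ⧸ AddCommGroup.torsion G) ∧
    ∀ n : ℕ, 0 < n → DivisibleByNat (G ⧸ AddCommGroup.torsion G) n

/-- `R_p ∈ σ(G)` iff `G/p-Tor(G)` is not divisible by `p`. -/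
def RpInSigma (G : Type) [AddCommGroup G] (p : ℕ) : Prop :=
  ¬ DivisibleByNat (G ⧸ pTorsion p G) p

/-- `ℤ_p ∈ σ(G)` iff `p-Tor(G)` is not divisible by `p`. -/
def ZpInSigma (G : Type) [AddCommGroup G] (p : ℕ) : Prop :=
  ¬ DivisibleByNat (pTorsion p G) p

/-- `ℚ_p ∈ σ(G)` iff `p-Tor(G)` is nonzero and divisible by `p`. -/
def QpInSigma (G : Type) [AddCommGroup G] (p : ℕ) : Prop :=
  Nontrivial (pTorsion p G) ∧ DivisibleByNat (pTorsion p G) p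

/-- The subgroup `R_p ⊆ ℚ` of rationals whose denominator is not divisible by `p`
(i.e. rationals `a/b` with `b` coprime to `p`). -/
def RpGroup (p : ℕ) : AddSubgroup ℚ where
  carrier := {q | ∃ a b : ℤ, IsCoprime b (p : ℤ) ∧ (b : ℚ) * q = (a : ℚ)}
  zero_mem' := ⟨0, 1, isCoprime_one_left, by simp⟩
  add_mem' := by
    rintro x y ⟨a₁, b₁, h₁, e₁⟩ ⟨a₂, b₂, h₂, e₂⟩
    refine ⟨a₁ * b₂ + a₂ * b₁, b₁ * b₂, h₁.mul_left h₂, ?_⟩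
    push_cast
    linear_combination (b₂ : ℚ) * e₁ + (b₁ : ℚ) * e₂
  neg_mem' := by
    rintro x ⟨a, b, h, e⟩
    exact ⟨-a, b, h, by push_cast; linear_combination -e⟩

/-!
The vanishing of `G ⊗ H` is governed by a criterion symmetric in `G` and `H`: one of the two groups
is torsion and, for every prime `p`, one of the two is `p`-divisible and each of them is free of
`p`-torsion unless the other is `p`-divisible modulo its `p`-torsion. Necessity comes from pairing
functionals `G → ℤ/p` and `H → ℤ/p`, and from the flatness of `G` and `H` modulo torsion. For
sufficiency, split a torsion element into its primary components: in a product with an element `t`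
such that `p ^ k • t = 0`, the other factor may be changed by multiples of `p ^ k`, hence moved into
its `p`-torsion, where `p`-divisibility of either group kills the product.

Each of the groups `ℚ`, `ℤ/p`, `ℚ/R_p`, `R_p` detects one condition on `G`, and `σ(H)` records which
of these conditions the criterion demands.
-/

open Function AddCommGroup

section Divisibility

variable {A : Type*} [AddCommGroup A]

lemma surjective_pow_smul {M α : Type*} [Monoid M] [MulAction M α] {m : M}
    (h : Surjective (m • · : α → α)) (k : ℕ) : Surjective (m ^ k • · : α → α) :=
  smul_iterate (α := α) m k ▸ h.iterate k

lemma surjective_nsmul_of_forall_prime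
    (h : ∀ p : ℕ, p.Prime → Surjective (p • · : A → A)) {n : ℕ} (hn : n ≠ 0) :
    Surjective (n • · : A → A) := by
  induction n using induction_on_primes with
  | zero => exact absurd rfl hn
  | one => simpa only [one_smul] using! surjective_id
  | prime_mul p n hp ih =>
    simpa only [mul_smul] using! (h p hp).comp (ih (right_ne_zero_of_mul hn))

lemma surjective_nsmul_quotient_iff {N : AddSubgroup A} {n : ℕ} :
    Surjective (n • · : A ⧸ N → A ⧸ N) ↔ ∀ a : A, ∃ b : A, a - n • b ∈ N := by
  simp only [Surjective, QuotientAddGroup.forall_mk, QuotientAddGroup.mk_surjective.exists,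
    ← QuotientAddGroup.mk_nsmul, QuotientAddGroup.eq, neg_add_eq_sub]

lemma surjective_nsmul_quotient {n : ℕ} (h : Surjective (n • · : A → A)) (N : AddSubgroup A) :
    Surjective (n • · : A ⧸ N → A ⧸ N) :=
  surjective_nsmul_quotient_iff.2 fun a => (h a).imp fun b hb => by simp [← hb]

lemma surjective_nsmul_of_quotient {N : AddSubgroup A} {n : ℕ}
    (hN : Surjective (n • · : N → N)) (hA : Surjective (n • · : A ⧸ N → A ⧸ N)) :
    Surjective (n • · : A → A) := by
  intro a
  obtain ⟨b, hb⟩ := surjective_nsmul_quotient_iff.1 hA a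
  obtain ⟨c, hc⟩ := hN ⟨a - n • b, hb⟩
  have hc' : n • (c : A) = a - n • b := congrArg Subtype.val hc
  exact ⟨b + c, by simp [hc']⟩

end Divisibility

section PrimaryComponent

variable {A : Type*} [AddCommGroup A] {p : ℕ}

lemma primaryComponent_le_torsion (hp : p ≠ 0) : primaryComponent A p ≤ torsion A :=
  fun _ ⟨k, hk⟩ => isOfFinAddOrder_iff_nsmul_eq_zero.2 ⟨p ^ k, pow_pos hp.pos k, hk⟩

lemma primaryComponent_eq_bot (h : ∀ a : A, p • a = 0 → a = 0) : primaryComponent A p = ⊥ := by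
  refine (AddSubgroup.eq_bot_iff_forall _).2 fun a ⟨k, hk⟩ => ?_
  induction k with
  | zero => simpa using hk
  | succ k ih => exact ih (h _ (by rw [smul_smul, ← pow_succ', hk]))

lemma surjective_nsmul_primaryComponent (h : Surjective (p • · : A → A)) :
    Surjective (p • · : primaryComponent A p → primaryComponent A p) := by
  rintro ⟨a, k, hk⟩
  obtain ⟨b, rfl⟩ := h a
  exact ⟨⟨b, k + 1, by rw [pow_succ, mul_smul, hk]⟩, rfl⟩

lemma exists_sub_nsmul_mem_primaryComponent (hp : p.Prime) {a : A} (ha : IsOfFinAddOrder a) :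
    ∃ b : A, a - p • b ∈ primaryComponent A p := by
  obtain ⟨n, hn, hna⟩ := isOfFinAddOrder_iff_nsmul_eq_zero.1 ha
  obtain ⟨k, m, hm, rfl⟩ := Nat.exists_eq_pow_mul_and_not_dvd hn.ne' p hp.ne_one
  obtain ⟨u, v, huv⟩ := Nat.isCoprime_iff_coprime.2 (hp.coprime_iff_not_dvd.2 hm)
  have hsub : a - p • u • a = v • m • a := by
    linear_combination (norm := module) -huv • a
  have hma : m • a ∈ primaryComponent A p := ⟨k, by rw [smul_smul, hna]⟩
  exact ⟨u • a, hsub ▸ AddSubgroup.zsmul_mem _ hma v⟩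

lemma surjective_nsmul_quotient_torsion_iff (hp : p.Prime) :
    Surjective (p • · : A ⧸ torsion A → A ⧸ torsion A) ↔
      Surjective (p • · : A ⧸ primaryComponent A p → A ⧸ primaryComponent A p) := by
  simp only [surjective_nsmul_quotient_iff]
  refine ⟨fun h a => ?_, fun h a => (h a).imp fun b hb =>
    primaryComponent_le_torsion hp.ne_zero hb⟩
  obtain ⟨b, hb⟩ := h a
  obtain ⟨c, hc⟩ := exists_sub_nsmul_mem_primaryComponent hp hb
  exact ⟨b + c, by rwa [smul_add, ← sub_sub]⟩

lemma surjective_nsmul_quotient_primaryComponent_of_isAddTorsion (hA : IsAddTorsion A)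
    (hp : p.Prime) :
    Surjective (p • · : A ⧸ primaryComponent A p → A ⧸ primaryComponent A p) :=
  surjective_nsmul_quotient_iff.2 fun a => exists_sub_nsmul_mem_primaryComponent hp (hA a)

lemma surjective_nsmul_of_primaryComponent_eq_bot (hA : IsAddTorsion A) (hp : p.Prime)
    (h : primaryComponent A p = ⊥) : Surjective (p • · : A → A) := by
  intro a
  obtain ⟨b, hb⟩ := exists_sub_nsmul_mem_primaryComponent hp (hA a)
  rw [h, AddSubgroup.mem_bot, sub_eq_zero] at hb
  exact ⟨b, hb.symm⟩

lemma iSup_primaryComponent : ⨆ p : Nat.Primes, primaryComponent A p = torsion A := by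
  refine le_antisymm (iSup_le fun p => primaryComponent_le_torsion p.2.ne_zero) fun a ha => ?_
  obtain ⟨n, hn, hna⟩ := isOfFinAddOrder_iff_nsmul_eq_zero.1 ha
  clear ha
  induction n using Nat.recOnPosPrimePosCoprime generalizing a with
  | zero => exact absurd hn (lt_irrefl 0)
  | one => exact (one_smul ℕ a).symm.trans hna ▸ zero_mem _
  | prime_pow p k hp _ => exact AddSubgroup.mem_iSup_of_mem ⟨p, hp⟩ ⟨k, hna⟩
  | coprime m n hm hn' hmn ihm ihn =>
    obtain ⟨u, v, huv⟩ := Nat.isCoprime_iff_coprime.2 hmn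
    have hsplit : a = u • m • a + v • n • a := by
      linear_combination (norm := module) -huv • a
    have hm_mem := ihn (a := m • a) (by lia) (by rw [smul_smul, mul_comm, hna])
    have hn_mem := ihm (a := n • a) (by lia) (by rw [smul_smul, hna])
    exact hsplit ▸ add_mem (AddSubgroup.zsmul_mem _ hm_mem u) (AddSubgroup.zsmul_mem _ hn_mem v)

end PrimaryComponent

section Vanishing

lemma subsingleton_tensorProduct_iff_forall_tmul {R M N : Type*} [CommSemiring R]
    [AddCommMonoid M] [AddCommMonoid N] [Module R M] [Module R N] :
    Subsingleton (M ⊗[R] N) ↔ ∀ (m : M) (n : N), m ⊗ₜ[R] n = 0 := by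
  refine ⟨fun _ m n => Subsingleton.elim _ _, fun h => subsingleton_of_forall_eq 0 fun z => ?_⟩
  induction z with
  | zero => rfl
  | tmul m n => exact h m n
  | add x y hx hy => rw [hx, hy, add_zero]

lemma subsingleton_tensorProduct_comm {R M N : Type*} [CommSemiring R]
    [AddCommMonoid M] [AddCommMonoid N] [Module R M] [Module R N] :
    Subsingleton (M ⊗[R] N) ↔ Subsingleton (N ⊗[R] M) :=
  (TensorProduct.comm R M N).toEquiv.subsingleton_congr

variable {A B : Type*} [AddCommGroup A] [AddCommGroup B] {p : ℕ}

lemma tmul_eq_zero_of_mem_primaryComponent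
    (hAB : Surjective (p • · : A → A) ∨ Surjective (p • · : B → B))
    (hA : Surjective (p • · : A ⧸ primaryComponent A p → A ⧸ primaryComponent A p))
    (a : A) {t : B} (ht : t ∈ primaryComponent B p) : a ⊗ₜ[ℤ] t = 0 := by
  obtain ⟨k, hk⟩ := ht
  have hpow (b : A) : (p ^ k • b) ⊗ₜ[ℤ] t = 0 := by
    rw [TensorProduct.smul_tmul, hk, TensorProduct.tmul_zero]
  rcases hAB with hA' | hB
  · obtain ⟨b, rfl⟩ := surjective_pow_smul hA' k a
    exact hpow b
  · obtain ⟨b, m, hm⟩ := surjective_nsmul_quotient_iff.1 (surjective_pow_smul hA k) a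
    obtain ⟨s, rfl⟩ := surjective_pow_smul hB m t
    rw [← sub_add_cancel a (p ^ k • b), TensorProduct.add_tmul, hpow, add_zero,
      ← TensorProduct.smul_tmul, hm, TensorProduct.zero_tmul]

lemma subsingleton_tensorProduct_of_isAddTorsion (hA : IsAddTorsion A)
    (hAB : ∀ p : ℕ, p.Prime → Surjective (p • · : A → A) ∨ Surjective (p • · : B → B))
    (hB : ∀ p : ℕ, p.Prime → primaryComponent A p = ⊥ ∨
      Surjective (p • · : B ⧸ primaryComponent B p → B ⧸ primaryComponent B p)) :
    Subsingleton (A ⊗[ℤ] B) := by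
  rw [subsingleton_tensorProduct_comm, subsingleton_tensorProduct_iff_forall_tmul]
  intro b a
  have hle : ⨆ p : Nat.Primes, primaryComponent A p ≤
      (TensorProduct.mk ℤ B A b).toAddMonoidHom.ker := by
    refine iSup_le fun ⟨p, hp⟩ t ht => ?_
    rcases hB p hp with hbot | hdiv
    · rw [(AddSubgroup.eq_bot_iff_forall _).1 hbot t ht]
      exact zero_mem _
    · exact tmul_eq_zero_of_mem_primaryComponent (hAB p hp).symm hdiv b ht
  exact hle (iSup_primaryComponent.ge (hA a))

end Vanishing

section Necessity

variable {A B : Type*} [AddCommGroup A] [AddCommGroup B] {p : ℕ}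

lemma subsingleton_tensorProduct_quotient (h : Subsingleton (A ⊗[ℤ] B)) (N : AddSubgroup B) :
    Subsingleton (A ⊗[ℤ] (B ⧸ N)) := by
  have hsurj := LinearMap.lTensor_surjective A (g := (QuotientAddGroup.mk' N).toIntLinearMap)
    (QuotientAddGroup.mk'_surjective N)
  exact ⟨hsurj.forall₂.2 fun x y => congrArg _ (h.elim x y)⟩

lemma exists_addMonoidHom_zmod_ne_zero [Fact p.Prime] {a : A} (ha : a ∉ Set.range (p • · : A → A)) :
    ∃ f : A →+ ZMod p, f a ≠ 0 := by
  have hne : ModN.mkQ p a ≠ 0 := fun h0 =>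
    ha (by simpa using (Submodule.Quotient.mk_eq_zero _).1 h0)
  obtain ⟨φ, hφ⟩ := not_forall.1 (mt (Module.forall_dual_apply_eq_zero_iff (ZMod p) _).1 hne)
  exact ⟨φ.toAddMonoidHom.comp (ModN.mkQ p), hφ⟩

lemma surjective_nsmul_or_of_subsingleton_tensorProduct (hp : p.Prime)
    (h : Subsingleton (A ⊗[ℤ] B)) : Surjective (p • · : A → A) ∨ Surjective (p • · : B → B) := by
  have : Fact p.Prime := ⟨hp⟩
  by_contra! hAB
  obtain ⟨⟨a, ha⟩, ⟨b, hb⟩⟩ := hAB.imp not_forall.1 not_forall.1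
  obtain ⟨f, hf⟩ := exists_addMonoidHom_zmod_ne_zero ha
  obtain ⟨g, hg⟩ := exists_addMonoidHom_zmod_ne_zero hb
  have hfg : f a * g b = LinearMap.mul' ℤ (ZMod p)
      (TensorProduct.map f.toIntLinearMap g.toIntLinearMap (a ⊗ₜ[ℤ] b)) := by simp
  rw [h.elim (a ⊗ₜ[ℤ] b) 0, map_zero, map_zero] at hfg
  exact mul_ne_zero hf hg hfg

lemma subsingleton_tensorProduct_zmod_iff (hp : p.Prime) :
    Subsingleton (A ⊗[ℤ] ZMod p) ↔ Surjective (p • · : A → A) := by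
  refine ⟨fun h => ?_, fun h => subsingleton_tensorProduct_iff_forall_tmul.2 fun a x => ?_⟩
  · have : Fact p.Prime := ⟨hp⟩
    refine (surjective_nsmul_or_of_subsingleton_tensorProduct hp h).resolve_right fun hsurj => ?_
    simpa using hsurj 1
  · obtain ⟨b, rfl⟩ := h a
    rw [TensorProduct.smul_tmul, nsmul_eq_mul, CharP.cast_eq_zero, zero_mul,
      TensorProduct.tmul_zero]

lemma exists_injective_zmod_addMonoidHom (hp : p.Prime) {a : A} (ha : a ≠ 0) (hpa : p • a = 0) :
    ∃ f : ZMod p →+ A, Injective f := by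
  have : Fact p.Prime := ⟨hp⟩
  refine ⟨ZMod.lift p ⟨zmultiplesHom A a, by simpa using hpa⟩, ?_⟩
  rw [ZMod.lift_injective]
  intro m hm
  rw [ZMod.intCast_zmod_eq_zero_iff_dvd, ← addOrderOf_eq_prime hpa ha]
  exact addOrderOf_dvd_iff_zsmul_eq_zero.2 (by simpa using hm)

lemma primaryComponent_eq_bot_or_of_isAddTorsionFree [IsAddTorsionFree B] (hp : p.Prime)
    (h : Subsingleton (A ⊗[ℤ] B)) :
    primaryComponent A p = ⊥ ∨ Surjective (p • · : B → B) := by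
  refine or_iff_not_imp_right.2 fun hB => primaryComponent_eq_bot fun a hpa => ?_
  by_contra ha
  obtain ⟨f, hf⟩ := exists_injective_zmod_addMonoidHom hp ha hpa
  have hsub : Subsingleton (ZMod p ⊗[ℤ] B) :=
    (Module.Flat.rTensor_preserves_injective_linearMap f.toIntLinearMap hf).subsingleton
  exact hB ((subsingleton_tensorProduct_zmod_iff hp).1 (subsingleton_tensorProduct_comm.1 hsub))

lemma isAddTorsion_of_subsingleton_tensorProduct [IsAddTorsionFree B] [Nontrivial B]
    (h : Subsingleton (A ⊗[ℤ] B)) : IsAddTorsion A := by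
  intro a
  by_contra ha
  have hsub : Subsingleton (ℤ ⊗[ℤ] B) :=
    (Module.Flat.rTensor_preserves_injective_linearMap (LinearMap.toSpanSingleton ℤ A a)
      (injective_zsmul_iff_not_isOfFinAddOrder.2 ha)).subsingleton
  exact not_subsingleton B (TensorProduct.lid ℤ B).symm.toEquiv.subsingleton

lemma isAddTorsion_or_of_subsingleton_tensorProduct (h : Subsingleton (A ⊗[ℤ] B)) :
    IsAddTorsion A ∨ IsAddTorsion B := by
  refine or_iff_not_imp_right.2 fun hB => ?_
  have : Nontrivial (B ⧸ torsion B) :=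
    QuotientAddGroup.nontrivial_iff.2 (mt torsion_eq_top_iff.1 hB)
  exact isAddTorsion_of_subsingleton_tensorProduct
    (subsingleton_tensorProduct_quotient h (torsion B))

lemma primaryComponent_eq_bot_or_of_subsingleton_tensorProduct (hp : p.Prime)
    (h : Subsingleton (A ⊗[ℤ] B)) :
    primaryComponent A p = ⊥ ∨
      Surjective (p • · : B ⧸ primaryComponent B p → B ⧸ primaryComponent B p) := by
  rw [← surjective_nsmul_quotient_torsion_iff hp]
  exact primaryComponent_eq_bot_or_of_isAddTorsionFree hp
    (subsingleton_tensorProduct_quotient h (torsion B))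

end Necessity

theorem subsingleton_tensorProduct_iff {A B : Type*} [AddCommGroup A] [AddCommGroup B] :
    Subsingleton (A ⊗[ℤ] B) ↔ (IsAddTorsion A ∨ IsAddTorsion B) ∧ ∀ p : ℕ, p.Prime →
      (Surjective (p • · : A → A) ∨ Surjective (p • · : B → B)) ∧
      (primaryComponent A p = ⊥ ∨
        Surjective (p • · : B ⧸ primaryComponent B p → B ⧸ primaryComponent B p)) ∧
      (primaryComponent B p = ⊥ ∨
        Surjective (p • · : A ⧸ primaryComponent A p → A ⧸ primaryComponent A p)) := by
  refine ⟨fun h => ⟨isAddTorsion_or_of_subsingleton_tensorProduct h, fun p hp =>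
    ⟨surjective_nsmul_or_of_subsingleton_tensorProduct hp h,
      primaryComponent_eq_bot_or_of_subsingleton_tensorProduct hp h,
      primaryComponent_eq_bot_or_of_subsingleton_tensorProduct hp
        (subsingleton_tensorProduct_comm.1 h)⟩⟩, ?_⟩
  rintro ⟨hA | hB, h⟩
  · exact subsingleton_tensorProduct_of_isAddTorsion hA (fun p hp => (h p hp).1)
      fun p hp => (h p hp).2.1
  · exact subsingleton_tensorProduct_comm.1 <|
      subsingleton_tensorProduct_of_isAddTorsion hB (fun p hp => (h p hp).1.symm)
        fun p hp => (h p hp).2.2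

section BocksteinGroups

variable {A : Type*} [AddCommGroup A] {p : ℕ}

lemma surjective_nsmul_rat {n : ℕ} (hn : n ≠ 0) : Surjective (n • · : ℚ → ℚ) := fun q =>
  ⟨q / n, by simp [mul_div_cancel₀, hn]⟩

lemma subsingleton_tensorProduct_rat_iff : Subsingleton (A ⊗[ℤ] ℚ) ↔ IsAddTorsion A :=
  ⟨isAddTorsion_of_subsingleton_tensorProduct, fun hA =>
    subsingleton_tensorProduct_of_isAddTorsion hA
      (fun _ hp => .inr (surjective_nsmul_rat hp.ne_zero))
      (fun _ hp => .inr (surjective_nsmul_quotient (surjective_nsmul_rat hp.ne_zero) _))⟩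

lemma one_mem_RpGroup : (1 : ℚ) ∈ RpGroup p :=
  ⟨1, 1, isCoprime_one_left, by simp⟩

lemma inv_notMem_RpGroup (hp : p.Prime) : (p : ℚ)⁻¹ ∉ RpGroup p := by
  rintro ⟨a, b, hb, h⟩
  rw [mul_inv_eq_iff_eq_mul₀ (Nat.cast_ne_zero.2 hp.ne_zero)] at h
  have hdvd : (p : ℤ) ∣ b := Dvd.intro_left a (by exact_mod_cast h.symm)
  exact (Nat.prime_iff_prime_int.1 hp).not_isUnit (hb.isUnit_of_dvd' hdvd dvd_rfl)

lemma not_surjective_nsmul_RpGroup (hp : p.Prime) :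
    ¬ Surjective (p • · : RpGroup p → RpGroup p) := by
  intro h
  obtain ⟨⟨y, hy⟩, hpy⟩ := h ⟨1, one_mem_RpGroup⟩
  have hpy' : (p : ℚ) * y = 1 := by simpa using congrArg Subtype.val hpy
  exact inv_notMem_RpGroup hp (eq_inv_of_mul_eq_one_right hpy' ▸ hy)

lemma surjective_nsmul_RpGroup {n : ℕ} (hn : n ≠ 0) (h : n.Coprime p) :
    Surjective (n • · : RpGroup p → RpGroup p) := by
  rintro ⟨x, a, b, hb, hx⟩
  obtain ⟨y, rfl⟩ := surjective_nsmul_rat hn x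
  refine ⟨⟨y, a, b * n, hb.mul_left (Nat.isCoprime_iff_coprime.2 h), ?_⟩, rfl⟩
  rw [← hx, Int.cast_mul, Int.cast_natCast, mul_assoc, ← nsmul_eq_mul n]

lemma primaryComponent_rat_quotient_RpGroup (hp : p.Prime) :
    primaryComponent (ℚ ⧸ RpGroup p) p = ⊤ := by
  refine (AddSubgroup.eq_top_iff' _).2 (QuotientAddGroup.forall_mk.2 fun q => ?_)
  obtain ⟨k, m, hm, hkm⟩ := Nat.exists_eq_pow_mul_and_not_dvd q.den_ne_zero p hp.ne_one
  refine ⟨k, (QuotientAddGroup.eq_zero_iff (p ^ k • q)).2 ⟨q.num, m,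
    Nat.isCoprime_iff_coprime.2 (hp.coprime_iff_not_dvd.2 hm).symm, ?_⟩⟩
  rw [← Rat.mul_den_eq_num q, hkm, nsmul_eq_mul]
  push_cast
  ring

lemma primaryComponent_rat_quotient_RpGroup_ne_bot (hp : p.Prime) :
    primaryComponent (ℚ ⧸ RpGroup p) p ≠ ⊥ := by
  have : Nontrivial (ℚ ⧸ RpGroup p) := QuotientAddGroup.nontrivial_iff.2 fun htop =>
    inv_notMem_RpGroup hp (htop ▸ AddSubgroup.mem_top _)
  exact primaryComponent_rat_quotient_RpGroup hp ▸ top_ne_bot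

lemma subsingleton_tensorProduct_rat_quotient_RpGroup_iff (hp : p.Prime) :
    Subsingleton (A ⊗[ℤ] (ℚ ⧸ RpGroup p)) ↔
      Surjective (p • · : A ⧸ primaryComponent A p → A ⧸ primaryComponent A p) := by
  refine ⟨fun h => (primaryComponent_eq_bot_or_of_subsingleton_tensorProduct hp
    (subsingleton_tensorProduct_comm.1 h)).resolve_left
      (primaryComponent_rat_quotient_RpGroup_ne_bot hp), fun h => ?_⟩
  have hdiv := surjective_nsmul_quotient (surjective_nsmul_rat hp.ne_zero) (RpGroup p)
  exact subsingleton_tensorProduct_iff_forall_tmul.2 fun a x =>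
    tmul_eq_zero_of_mem_primaryComponent (.inr hdiv) h a
      (primaryComponent_rat_quotient_RpGroup hp ▸ AddSubgroup.mem_top x)

lemma subsingleton_tensorProduct_RpGroup_iff (hp : p.Prime) :
    Subsingleton (A ⊗[ℤ] RpGroup p) ↔ IsAddTorsion A ∧ primaryComponent A p = ⊥ := by
  have : IsAddTorsionFree (RpGroup p) :=
    Subtype.val_injective.isAddTorsionFree (RpGroup p).subtype
  have : Nontrivial (RpGroup p) := ⟨⟨1, one_mem_RpGroup⟩, 0, by simp [Subtype.ext_iff]⟩
  refine ⟨fun h => ⟨isAddTorsion_of_subsingleton_tensorProduct h,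
    (primaryComponent_eq_bot_or_of_isAddTorsionFree hp h).resolve_right
      (not_surjective_nsmul_RpGroup hp)⟩, fun ⟨hA, hbot⟩ => ?_⟩
  have hdiv {q : ℕ} (hq : q.Prime) (hqp : q ≠ p) : Surjective (q • · : RpGroup p → RpGroup p) :=
    surjective_nsmul_RpGroup hq.ne_zero ((Nat.coprime_primes hq hp).2 hqp)
  refine subsingleton_tensorProduct_of_isAddTorsion hA (fun q hq => ?_) fun q hq => ?_
  · rcases eq_or_ne q p with rfl | hqp
    · exact .inl (surjective_nsmul_of_primaryComponent_eq_bot hA hp hbot)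
    · exact .inr (hdiv hq hqp)
  · rcases eq_or_ne q p with rfl | hqp
    · exact .inl hbot
    · exact .inr (surjective_nsmul_quotient (hdiv hq hqp) _)

end BocksteinGroups

section BocksteinFamily

variable {A B : Type*} [AddCommGroup A] [AddCommGroup B]

lemma isAddTorsion_or_of_bockstein
    (hQ : (Nontrivial (B ⧸ torsion B) ∧
      ∀ n : ℕ, 0 < n → Surjective (n • · : B ⧸ torsion B → B ⧸ torsion B)) → IsAddTorsion A)
    (hR : ∀ p : ℕ, p.Prime →
      ¬ Surjective (p • · : B ⧸ primaryComponent B p → B ⧸ primaryComponent B p) →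
        IsAddTorsion A) :
    IsAddTorsion A ∨ IsAddTorsion B := by
  refine or_iff_not_imp_right.2 fun hB => ?_
  by_cases hdiv : ∀ p : ℕ, p.Prime → Surjective (p • · : B ⧸ torsion B → B ⧸ torsion B)
  · exact hQ ⟨QuotientAddGroup.nontrivial_iff.2 (mt torsion_eq_top_iff.1 hB),
      fun n hn => surjective_nsmul_of_forall_prime hdiv hn.ne'⟩
  · obtain ⟨p, hp, hnot⟩ : ∃ p : ℕ, p.Prime ∧
        ¬ Surjective (p • · : B ⧸ torsion B → B ⧸ torsion B) := by simpa using hdiv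
    exact hR p hp (mt (surjective_nsmul_quotient_torsion_iff hp).2 hnot)

theorem subsingleton_tensorProduct_iff_bockstein :
    Subsingleton (A ⊗[ℤ] B) ↔
      ((Nontrivial (B ⧸ torsion B) ∧
        ∀ n : ℕ, 0 < n → Surjective (n • · : B ⧸ torsion B → B ⧸ torsion B)) →
          IsAddTorsion A) ∧
      (∀ p : ℕ, p.Prime → ¬ Surjective (p • · : primaryComponent B p → primaryComponent B p) →
        Surjective (p • · : A → A)) ∧
      (∀ p : ℕ, p.Prime → (Nontrivial (primaryComponent B p) ∧
        Surjective (p • · : primaryComponent B p → primaryComponent B p)) →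
          Surjective (p • · : A ⧸ primaryComponent A p → A ⧸ primaryComponent A p)) ∧
      (∀ p : ℕ, p.Prime →
        ¬ Surjective (p • · : B ⧸ primaryComponent B p → B ⧸ primaryComponent B p) →
          IsAddTorsion A ∧ primaryComponent A p = ⊥) := by
  rw [subsingleton_tensorProduct_iff]
  constructor
  · rintro ⟨htor, hprime⟩
    refine ⟨fun ⟨hne, _⟩ => ?_, fun p hp hZ => ?_, fun p hp ⟨hne, _⟩ => ?_, fun p hp hR => ?_⟩
    · exact htor.resolve_right (mt torsion_eq_top_iff.2 (QuotientAddGroup.nontrivial_iff.1 hne))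
    · exact (hprime p hp).1.resolve_right (mt surjective_nsmul_primaryComponent hZ)
    · exact (hprime p hp).2.2.resolve_left ((AddSubgroup.nontrivial_iff_ne_bot _).1 hne)
    · exact ⟨htor.resolve_right
        (mt (surjective_nsmul_quotient_primaryComponent_of_isAddTorsion · hp) hR),
        (hprime p hp).2.1.resolve_right hR⟩
  · rintro ⟨hQ, hZ, hQp, hR⟩
    refine ⟨isAddTorsion_or_of_bockstein hQ fun p hp h => (hR p hp h).1, fun p hp => ?_⟩
    by_cases hBq : Surjective (p • · : B ⧸ primaryComponent B p → B ⧸ primaryComponent B p)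
    · by_cases hBp : Surjective (p • · : primaryComponent B p → primaryComponent B p)
      · exact ⟨.inr (surjective_nsmul_of_quotient hBp hBq), .inr hBq, or_iff_not_imp_left.2
          fun hne => hQp p hp ⟨(AddSubgroup.nontrivial_iff_ne_bot _).2 hne, hBp⟩⟩
      · have hA := hZ p hp hBp
        exact ⟨.inl hA, .inr hBq, .inr (surjective_nsmul_quotient hA _)⟩
    · obtain ⟨htor, hbot⟩ := hR p hp hBq
      have hA := surjective_nsmul_of_primaryComponent_eq_bot htor hp hbot
      exact ⟨.inl hA, .inl hbot, .inr (surjective_nsmul_quotient hA _)⟩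

end BocksteinFamily

theorem stmt11_general (G H : Type*) [AddCommGroup G] [AddCommGroup H] :
    Subsingleton (G ⊗[ℤ] H) ↔
      ((Nontrivial (H ⧸ torsion H) ∧
        ∀ n : ℕ, 0 < n → Surjective (n • · : H ⧸ torsion H → H ⧸ torsion H)) →
          Subsingleton (G ⊗[ℤ] ℚ)) ∧
      (∀ p : ℕ, p.Prime → ¬ Surjective (p • · : primaryComponent H p → primaryComponent H p) →
        Subsingleton (G ⊗[ℤ] ZMod p)) ∧
      (∀ p : ℕ, p.Prime → (Nontrivial (primaryComponent H p) ∧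
        Surjective (p • · : primaryComponent H p → primaryComponent H p)) →
          Subsingleton (G ⊗[ℤ] (ℚ ⧸ RpGroup p))) ∧
      (∀ p : ℕ, p.Prime →
        ¬ Surjective (p • · : H ⧸ primaryComponent H p → H ⧸ primaryComponent H p) →
          Subsingleton (G ⊗[ℤ] RpGroup p)) := by
  rw [subsingleton_tensorProduct_iff_bockstein]
  refine .and (imp_congr_right fun _ => ?_) <| .and (forall₃_congr fun p hp _ => ?_) <|
    .and (forall₃_congr fun p hp _ => ?_) (forall₃_congr fun p hp _ => ?_)
  · exact subsingleton_tensorProduct_rat_iff.symm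
  · exact (subsingleton_tensorProduct_zmod_iff hp).symm
  · exact (subsingleton_tensorProduct_rat_quotient_RpGroup_iff hp).symm
  · exact (subsingleton_tensorProduct_RpGroup_iff hp).symm

/-- `G ⊗ H` is trivial iff `G ⊗ B` is trivial for every member `B` of the Bockstein family
`σ(H) ⊆ {ℚ, ℤ_p, ℚ_p, R_p : p prime}`. -/
theorem stmt11 (G H : Type) [AddCommGroup G] [AddCommGroup H] :
    Subsingleton (G ⊗[ℤ] H) ↔
      ((QInSigma H → Subsingleton (G ⊗[ℤ] ℚ)) ∧
       (∀ p : ℕ, p.Prime → ZpInSigma H p → Subsingleton (G ⊗[ℤ] ZMod p)) ∧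
       (∀ p : ℕ, p.Prime → QpInSigma H p → Subsingleton (G ⊗[ℤ] (ℚ ⧸ RpGroup p))) ∧
       (∀ p : ℕ, p.Prime → RpInSigma H p → Subsingleton (G ⊗[ℤ] ↥(RpGroup p)))) :=
  -- `pTorsion p H` and `primaryComponent H p` are equal by definition.
  stmt11_general G H
end

section
/- Let A ⊆ X, B ⊆ Y be homotopical Z_n- and Z_m-sets, respectively, in Tychonov spaces X and Y. Then A × B is a homotopical Z_{n+m+1}-set in X × Y. -/
open unitInterval

/-- `A` is a homotopical `Z_n`-set in `X`: `A` is closed and for every open cover `𝒰` of `X`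
and every map `f : [0,1]^n → X` there is a map `f' : [0,1]^n → X \ A` which is
`𝒰`-homotopic to `f`. -/
def IsHomotopicalZSet {X : Type} [TopologicalSpace X] (n : ℕ) (A : Set X) : Prop :=
  IsClosed A ∧ ∀ 𝒰 : Set (Set X), (∀ U ∈ 𝒰, IsOpen U) → ⋃₀ 𝒰 = Set.univ →
    ∀ f : C((Fin n → unitInterval), X), ∃ f' : C((Fin n → unitInterval), X),
      (∀ z, f' z ∉ A) ∧
      ∃ H : f.Homotopy f', ∀ z, ∃ U ∈ 𝒰, ∀ t : unitInterval, H (t, z) ∈ U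

/-!
Write `f = (f₁, f₂) : [0,1]^(n+m+1) → X × Y`. Two small perturbations `g`, `g'` of `[0,1]` push
every point into a finite grid `G` under one or the other. Push `f₁` off `A` over the cube points
with at most `n` coordinates outside `G` (contained in a finite union of `n`-dimensional faces),
push `f₂` off `B` over those with at most `m`, and precompose the results coordinatewise with `g`
and `g'`. A point mapped to `A × B` would have more than `n` coordinates that `g` leaves outside `G`
and more than `m` that `g'` leaves outside `G`, but these sets of coordinates are disjoint.
-/

open Set ContinuousMap

/-- `f` and `g` are joined by a homotopy through maps with graph in `O ⊆ Z × X`. Smallness of a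
homotopy starting at `f` is measured by open neighbourhoods `O` of the graph of `f`. -/
def HomotopicIn {Z X : Type*} [TopologicalSpace Z] [TopologicalSpace X] (O : Set (Z × X))
    (f g : C(Z, X)) : Prop :=
  f.HomotopicWith g fun h => ∀ z, (z, h z) ∈ O

/-- Every map `Z → X` can be pushed off `A` over `K` by an arbitrarily small homotopy. -/
def CanAvoidOn {Z X : Type*} [TopologicalSpace Z] [TopologicalSpace X] (A : Set X)
    (K : Set Z) : Prop :=
  ∀ (f : C(Z, X)) (O : Set (Z × X)), IsOpen O → (∀ z, (z, f z) ∈ O) →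
    ∃ g, HomotopicIn O f g ∧ ∀ z ∈ K, g z ∉ A

/-- The points of the cube `[0,1]^ι` with at most `n` coordinates outside the grid `G`. -/
def gridSkeleton {ι : Type*} (n : ℕ) (G : Set I) : Set (ι → I) :=
  {z | {i | z i ∉ G}.ncard ≤ n}

theorem isOpen_imp {Z : Type*} [TopologicalSpace Z] {p q : Z → Prop}
    (hp : IsClosed {z | p z}) (hq : IsOpen {z | q z}) : IsOpen {z | p z → q z} := by
  simp only [imp_iff_not_or]
  exact hp.isOpen_compl.union hq

namespace HomotopicIn

variable {Z X : Type*} [TopologicalSpace Z] [TopologicalSpace X] {O O' : Set (Z × X)}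
  {f g : C(Z, X)}

theorem right (h : HomotopicIn O f g) (z : Z) : (z, g z) ∈ O := by
  obtain ⟨H⟩ := h
  simpa using H.prop 1 z

theorem mono (h : HomotopicIn O f g) (hO : O ⊆ O') : HomotopicIn O' f g := by
  obtain ⟨H⟩ := h
  exact ⟨⟨H.toHomotopy, fun t z => hO (H.prop t z)⟩⟩

theorem comp_right {Z' : Type*} [TopologicalSpace Z'] (h : HomotopicIn O f g) (γ : C(Z', Z)) :
    HomotopicIn (Prod.map γ id ⁻¹' O) (f.comp γ) (g.comp γ) := by
  obtain ⟨H⟩ := h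
  exact ⟨⟨H.toHomotopy.compContinuousMap γ, fun t z => H.prop t (γ z)⟩⟩

theorem exists_cutoff {f₀ f₁ : C(Z, X)} {w : C(Z, ℝ)}
    (h : HomotopicIn {p | 0 ≤ w p.1 → p ∈ O} f₀ f₁) (hf : ∀ z, (z, f z) ∈ O)
    (hff₀ : ∀ z, 0 ≤ w z → f z = f₀ z) :
    ∃ f', HomotopicIn O f f' ∧ ∀ z, 1 ≤ w z → f' z = f₁ z := by
  obtain ⟨H⟩ := h
  let cut : ℝ → I := projIcc 0 1 zero_le_one
  have hcut : Continuous cut := continuous_projIcc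
  let F : C(I × Z, X) :=
    ⟨fun x => if 0 ≤ w x.2 then H (x.1 * cut (w x.2), x.2) else f x.2,
      continuous_if_le continuous_const (by fun_prop) (by fun_prop) (by fun_prop) fun x hx => by
        simp [cut, ← hx, hff₀ x.2 hx.le]⟩
  have hF₀ (z : Z) : F (0, z) = f z := by
    by_cases hz : 0 ≤ w z
    · simp [F, hz, hff₀ z hz]
    · simp [F, hz]
  refine ⟨F.curry 1, ⟨⟨⟨F, hF₀, fun _ => rfl⟩, fun t z => ?_⟩⟩, fun z hz => ?_⟩
  · change (z, F (t, z)) ∈ O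
    by_cases hz : 0 ≤ w z
    · simpa [F, hz] using H.prop (t * cut (w z)) z hz
    · simpa [F, hz] using hf z
  · have hcut₁ : cut (w z) = 1 := projIcc_of_right_le _ hz
    simp [F, zero_le_one.trans hz, hcut₁]

end HomotopicIn

theorem dist_convexComb_le (x y t : I) : dist x (Icc.convexComb x y t) ≤ dist x y := by
  have hsub : (x : ℝ) - Icc.convexComb x y t = t * (x - y) := by
    rw [Icc.coe_convexComb]; ring
  rw [Subtype.dist_eq, Subtype.dist_eq, Real.dist_eq, Real.dist_eq, hsub, abs_mul,
    abs_of_nonneg t.2.1]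
  exact mul_le_of_le_one_left (abs_nonneg _) t.2.2

theorem continuous_pi_convexComb {Z ι : Type*} [TopologicalSpace Z] {p q : Z → ι → I} {t : Z → I}
    (hp : Continuous p) (hq : Continuous q) (ht : Continuous t) :
    Continuous fun z i => Icc.convexComb (p z i) (q z i) (t z) :=
  continuous_pi fun i => Icc.continuous_convexComb_prod.comp <|
    ((continuous_apply i).comp hp).prodMk (((continuous_apply i).comp hq).prodMk ht)

section Cube

variable {ι X : Type*} [Fintype ι] [TopologicalSpace X]

theorem dist_pi_convexComb_le (p q : ι → I) (t : I) :
    dist p (fun i => Icc.convexComb (p i) (q i) t) ≤ dist p q :=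
  (dist_pi_le_iff dist_nonneg).2 fun i =>
    (dist_convexComb_le _ _ _).trans (dist_le_pi_dist p q i)

theorem exists_forall_dist_lt_mem {Z : Type*} [PseudoMetricSpace Z] [CompactSpace Z]
    (f : C(Z, X)) {O : Set (Z × X)} (hO : IsOpen O) (hf : ∀ z, (z, f z) ∈ O) :
    ∃ ε > 0, ∀ z z', dist z z' < ε → (z, f z') ∈ O := by
  have hopen : IsOpen (Prod.map id f ⁻¹' O) := hO.preimage (by fun_prop)
  have hdiag : Prod.map id f ⁻¹' O ∈ uniformity Z := by
    rw [← nhdsSet_diagonal_eq_uniformity, hopen.mem_nhdsSet]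
    rintro ⟨z, z'⟩ hz
    obtain rfl : z = z' := hz
    exact hf z
  obtain ⟨ε, hε, h⟩ := Metric.mem_uniformity_dist.1 hdiag
  exact ⟨ε, hε, fun _ _ hz => h hz⟩

theorem exists_homotopicIn_comp_of_dist_lt (f : C(ι → I, X)) {O : Set ((ι → I) × X)}
    (hO : IsOpen O) (hf : ∀ z, (z, f z) ∈ O) :
    ∃ ε > 0, ∀ g : C(ι → I, ι → I), (∀ z, dist z (g z) < ε) → HomotopicIn O f (f.comp g) := by
  obtain ⟨ε, hε, h⟩ := exists_forall_dist_lt_mem f hO hf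
  refine ⟨ε, hε, fun g hg => ?_⟩
  let F : C(I × (ι → I), X) :=
    ⟨fun x => f fun i => Icc.convexComb (x.2 i) (g x.2 i) x.1, f.continuous.comp <|
      continuous_pi_convexComb (by fun_prop) (by fun_prop) (by fun_prop)⟩
  exact ⟨⟨⟨F, fun z => by simp [F], fun z => by simp [F]⟩, fun t z =>
    h z _ ((dist_pi_convexComb_le _ _ _).trans_lt (hg z))⟩⟩

theorem exists_perturbation_eq_near_fixedPoints (ρ : C(ι → I, ι → I)) {ε : ℝ} (hε : 0 < ε) :
    ∃ (g : C(ι → I, ι → I)) (w : C(ι → I, ℝ)), (∀ z, dist z (g z) < ε) ∧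
      (∀ z, 0 ≤ w z → g z = ρ z) ∧ ∀ z, ρ z = z → 1 ≤ w z := by
  let w : C(ι → I, ℝ) := ⟨fun z => 1 - 2 * dist z (ρ z) / ε, by fun_prop⟩
  let cut : ℝ → I := projIcc 0 1 zero_le_one
  have hcut : Continuous cut := continuous_projIcc
  refine ⟨⟨fun z i => Icc.convexComb (z i) (ρ z i) (cut (1 + w z)),
    continuous_pi_convexComb (by fun_prop) (by fun_prop) (by fun_prop)⟩, w,
    fun z => ?_, fun z hz => ?_, fun z hz => ?_⟩
  · by_cases hz : dist z (ρ z) < ε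
    · exact (dist_pi_convexComb_le _ _ _).trans_lt hz
    · have hw : 1 + w z ≤ 0 := by
        have : 1 ≤ dist z (ρ z) / ε := (one_le_div hε).2 (not_lt.1 hz)
        simp only [w, coe_mk, mul_div_assoc]
        linarith
      simp [cut, projIcc_of_le_left _ hw, hε]
  · have hw : 1 ≤ 1 + w z := by linarith
    simp [cut, projIcc_of_right_le _ hw]
  · simp [w, hz]

end Cube

namespace CanAvoidOn

section

variable {Z Z' X : Type*} [TopologicalSpace Z] [TopologicalSpace Z'] [TopologicalSpace X]
  {A : Set X} {K L : Set Z}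

theorem empty : CanAvoidOn A (∅ : Set Z) :=
  fun f _ _ hf => ⟨f, .refl f hf, by simp⟩

theorem mono (h : CanAvoidOn A L) (hKL : K ⊆ L) : CanAvoidOn A K :=
  fun f O hO hf => (h f O hO hf).imp fun _ hg => ⟨hg.1, fun z hz => hg.2 z (hKL hz)⟩

theorem union (hA : IsClosed A) (hKc : IsClosed K) (hK : CanAvoidOn A K)
    (hL : CanAvoidOn A L) : CanAvoidOn A (K ∪ L) := by
  intro f O hO hf
  obtain ⟨g, hfg, hg⟩ := hK f O hO hf
  have hopen : IsOpen {p : Z × X | p.1 ∈ K → p.2 ∉ A} :=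
    isOpen_imp (hKc.preimage continuous_fst) (hA.isOpen_compl.preimage continuous_snd)
  obtain ⟨h, hgh, hh⟩ := hL g _ (hO.inter hopen) fun z => ⟨hfg.right z, hg z⟩
  refine ⟨h, hfg.trans (hgh.mono inter_subset_left), ?_⟩
  rintro z (hz | hz)
  · exact (hgh.right z).2 hz
  · exact hh z hz

theorem iUnion {κ : Type*} [Finite κ] {K : κ → Set Z} (hA : IsClosed A)
    (hKc : ∀ k, IsClosed (K k)) (hK : ∀ k, CanAvoidOn A (K k)) : CanAvoidOn A (⋃ k, K k) := by
  suffices ∀ s : Set κ, s.Finite → CanAvoidOn A (⋃ k ∈ s, K k) by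
    simpa only [mem_univ, iUnion_true] using this univ finite_univ
  intro s hs
  induction s, hs using Set.Finite.induction_on with
  | empty => simpa only [mem_empty_iff_false, iUnion_false, iUnion_empty] using empty
  | insert _ _ ih =>
    rw [biUnion_insert]
    exact union hA (hKc _) (hK _) ih

theorem exists_homotopicIn_comp [CompactSpace Z'] [T2Space Z] (hK : CanAvoidOn A K)
    (f : C(Z, X)) (γ : C(Z', Z)) {O : Set (Z' × X)} (hO : IsOpen O)
    (hf : ∀ z, (z, f (γ z)) ∈ O) :
    ∃ g : C(Z, X), HomotopicIn O (f.comp γ) (g.comp γ) ∧ ∀ z ∈ K, g z ∉ A := by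
  have hclosedMap : IsClosedMap (Prod.map γ (id : X → X)) :=
    (γ.continuous.isProperMap.prodMap isProperMap_id).isClosedMap
  obtain ⟨g, hfg, hg⟩ := hK f (kernImage (Prod.map γ id) O)
    (isClosedMap_iff_kernImage.1 hclosedMap hO) <| by
      rintro w ⟨z, x⟩ hzx
      obtain ⟨rfl, rfl⟩ : γ z = w ∧ x = f w := Prod.ext_iff.1 hzx
      exact hf z
  exact ⟨g, (hfg.comp_right γ).mono fun _ hp => hp rfl, hg⟩

end

variable {ι Q X : Type*} [TopologicalSpace Q] [TopologicalSpace X] {A : Set X}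

theorem setOf_comp_eq_self [Finite ι] [T2Space Q] (hQ : CanAvoidOn A (univ : Set Q))
    (c : C(Q, ι → I)) (r : C(ι → I, Q)) : CanAvoidOn A {z | c (r z) = z} := by
  cases nonempty_fintype ι
  intro f O hO hf
  obtain ⟨ε, hε, hfε⟩ := exists_homotopicIn_comp_of_dist_lt f hO hf
  obtain ⟨g, w, hgε, hgw, hw⟩ := exists_perturbation_eq_near_fixedPoints (c.comp r) hε
  have hfg : HomotopicIn O f (f.comp g) := hfε g hgε
  have hfgw (z : ι → I) (hz : 0 ≤ w z) : f (g z) = f (c (r z)) := congrArg f (hgw z hz)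
  have hopen : IsOpen {p : (ι → I) × X | 0 ≤ w p.1 → p ∈ O} :=
    isOpen_imp (isClosed_le continuous_const (by fun_prop)) hO
  obtain ⟨k, hk, hkA⟩ := hQ.exists_homotopicIn_comp (f.comp c) r hopen
    fun z hz => hfgw z hz ▸ hfg.right z
  obtain ⟨f', hf', hf'k⟩ := hk.exists_cutoff hfg.right hfgw
  exact ⟨f', hfg.trans hf', fun z hz => hf'k z (hw z hz) ▸ hkA _ trivial⟩

theorem face [Finite ι] {κ : Type*} (e : κ ↪ ι) (hκ : CanAvoidOn A (univ : Set (κ → I)))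
    (v : ι → I) : CanAvoidOn A {z : ι → I | ∀ i ∉ range e, z i = v i} := by
  let c : C(κ → I, ι → I) := ⟨fun w => Function.extend e w v, continuous_pi fun i => by
    by_cases hi : ∃ j, e j = i
    · obtain ⟨j, rfl⟩ := hi
      simpa only [e.injective.extend_apply] using continuous_apply j
    · simpa only [Function.extend_apply' _ _ _ hi] using continuous_const⟩
  let r : C(ι → I, κ → I) := ⟨fun z => z ∘ e, by fun_prop⟩
  refine (hκ.setOf_comp_eq_self c r).mono fun z hz => funext fun i => ?_
  change Function.extend e (z ∘ e) v i = z i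
  by_cases hi : ∃ j, e j = i
  · obtain ⟨j, rfl⟩ := hi
    exact e.injective.extend_apply _ _ _
  · rw [Function.extend_apply' _ _ _ hi, hz i hi]

theorem gridSkeleton [Fintype ι] {n : ℕ} (hA : IsClosed A) (hn : n ≤ Fintype.card ι)
    (hcube : CanAvoidOn A (univ : Set (Fin n → I))) {G : Set I} (hG : G.Finite) :
    CanAvoidOn A (gridSkeleton n G : Set (ι → I)) := by
  classical
  let vertices : Set (ι → I) := {v | ∀ i, v i ∈ insert 0 G}
  have : Finite vertices := (Finite.pi' fun _ => hG.insert 0).to_subtype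
  let face (k : (Fin n ↪ ι) × vertices) : Set (ι → I) := {z | ∀ i ∉ range k.1, z i = k.2.1 i}
  have hclosed (k) : IsClosed (face k) := by
    simp only [face, ofPred_forall]
    exact isClosed_iInter fun i => isClosed_iInter fun _ =>
      isClosed_eq (continuous_apply i) continuous_const
  refine (iUnion hA hclosed fun k => hcube.face k.1 k.2.1).mono fun z hz => ?_
  obtain ⟨T, hT, hTn⟩ := Finset.exists_superset_card_eq (s := {i | z i ∉ G}) (n := n)
    (by rwa [← ncard_coe_finset, Finset.coe_filter_univ]) hn
  let e : Fin n ↪ ι := (T.equivFinOfCardEq hTn).symm.toEmbedding.trans (.subtype _)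
  let v : ι → I := fun i => if z i ∈ G then z i else 0
  have hv : v ∈ vertices := fun i => by by_cases h : z i ∈ G <;> simp [v, h]
  refine mem_iUnion.2 ⟨(e, ⟨v, hv⟩), fun i hi => ?_⟩
  have hiT : i ∉ T := fun h => hi ⟨T.equivFinOfCardEq hTn ⟨i, h⟩, by simp [e]⟩
  have hiG : z i ∈ G := by
    by_contra h
    exact hiT (hT (by simpa using h))
  simp only [v, if_pos hiG]

end CanAvoidOn

theorem exists_isOpen_mem_forall_mem_graph {Z X : Type*} [TopologicalSpace Z] [CompactSpace Z]
    [TopologicalSpace X] [R1Space X] (f : C(Z, X)) {O : Set (Z × X)} (hO : IsOpen O)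
    (hf : ∀ z, (z, f z) ∈ O) (x : X) :
    ∃ W, IsOpen W ∧ x ∈ W ∧ ∀ z, f z ∈ W → ∀ y ∈ W, (z, y) ∈ O := by
  have hfiber : (f ⁻¹' closure {x}) ×ˢ {x} ⊆ O := by
    rintro ⟨z, y⟩ ⟨hz, hy⟩
    rw [show y = x from hy]
    have hins : Inseparable (f z) x := (specializes_iff_mem_closure.2 hz).inseparable.symm
    exact (((Inseparable.refl z).prod hins).mem_open_iff hO).1 (hf z)
  obtain ⟨P, U, hP, hU, hfP, hxU, hPU⟩ := generalized_tube_lemma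
    (isClosed_closure.preimage f.continuous).isCompact isCompact_singleton hO hfiber
  have hK : IsCompact (f '' Pᶜ) := hP.isClosed_compl.isCompact.image f.continuous
  refine ⟨U \ closure (f '' Pᶜ), hU.sdiff isClosed_closure, ⟨hxU rfl, ?_⟩, fun z hz y hy => ?_⟩
  · rw [hK.mem_closure_iff_exists_inseparable]
    rintro ⟨_, ⟨z, hz, rfl⟩, hins⟩
    exact hz (hfP hins.specializes'.mem_closure)
  · have hzP : z ∈ P := by
      by_contra h
      exact hz.2 (subset_closure ⟨z, h, rfl⟩)
    exact hPU ⟨hzP, hy.1⟩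

theorem IsHomotopicalZSet.canAvoidOn_univ {X : Type} [TopologicalSpace X] [R1Space X] {n : ℕ}
    {A : Set X} (hA : IsHomotopicalZSet n A) : CanAvoidOn A (univ : Set (Fin n → I)) := by
  intro f O hO hf
  obtain ⟨g, hg, H, hH⟩ := hA.2 {W | IsOpen W ∧ ∀ z, f z ∈ W → ∀ y ∈ W, (z, y) ∈ O}
    (fun _ hW => hW.1) (eq_univ_of_forall fun x =>
      let ⟨W, hW, hxW, hWO⟩ := exists_isOpen_mem_forall_mem_graph f hO hf x
      ⟨W, ⟨hW, hWO⟩, hxW⟩) f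
  refine ⟨g, ⟨⟨H, fun t z => ?_⟩⟩, fun z _ => hg z⟩
  obtain ⟨W, ⟨-, hWO⟩, hHW⟩ := hH z
  exact hWO z (by simpa using hHW 0) _ (hHW t)

theorem exists_isOpen_graph_prod_subset_cover {Z X Y : Type*} [TopologicalSpace Z]
    [CompactSpace Z] [RegularSpace Z] [TopologicalSpace X] [TopologicalSpace Y]
    (f₁ : C(Z, X)) (f₂ : C(Z, Y)) {𝒰 : Set (Set (X × Y))} (hopen : ∀ U ∈ 𝒰, IsOpen U)
    (hcover : ⋃₀ 𝒰 = univ) :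
    ∃ (O₁ : Set (Z × X)) (O₂ : Set (Z × Y)), IsOpen O₁ ∧ IsOpen O₂ ∧ (∀ z, (z, f₁ z) ∈ O₁) ∧
      (∀ z, (z, f₂ z) ∈ O₂) ∧
      ∀ z, ∃ U ∈ 𝒰, ∀ x y, (z, x) ∈ O₁ → (z, y) ∈ O₂ → (x, y) ∈ U := by
  let P (s : Set Z) : Prop := ∃ (O₁ : Set (Z × X)) (O₂ : Set (Z × Y)), IsOpen O₁ ∧ IsOpen O₂ ∧
    (∀ z, (z, f₁ z) ∈ O₁) ∧ (∀ z, (z, f₂ z) ∈ O₂) ∧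
    ∀ z ∈ s, ∃ U ∈ 𝒰, ∀ x y, (z, x) ∈ O₁ → (z, y) ∈ O₂ → (x, y) ∈ U
  suffices P univ by simpa only [P, mem_univ, true_imp_iff] using this
  refine isCompact_univ.induction_on (p := P) ?empty ?mono ?union ?nhds
  case empty => exact ⟨univ, univ, by simp⟩
  case mono =>
    rintro s t hst ⟨O₁, O₂, h₁, h₂, hf₁, hf₂, h⟩
    exact ⟨O₁, O₂, h₁, h₂, hf₁, hf₂, fun z hz => h z (hst hz)⟩
  case union =>
    rintro s t ⟨O₁, O₂, h₁, h₂, hf₁, hf₂, h⟩ ⟨O₁', O₂', h₁', h₂', hf₁', hf₂', h'⟩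
    refine ⟨O₁ ∩ O₁', O₂ ∩ O₂', h₁.inter h₁', h₂.inter h₂', fun z => ⟨hf₁ z, hf₁' z⟩,
      fun z => ⟨hf₂ z, hf₂' z⟩, ?_⟩
    rintro z (hz | hz)
    · exact (h z hz).imp fun U hU => ⟨hU.1, fun x y hx hy => hU.2 x y hx.1 hy.1⟩
    · exact (h' z hz).imp fun U hU => ⟨hU.1, fun x y hx hy => hU.2 x y hx.2 hy.2⟩
  case nhds =>
    rintro z -
    obtain ⟨U, hU, hzU⟩ : (f₁ z, f₂ z) ∈ ⋃₀ 𝒰 := hcover ▸ mem_univ _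
    obtain ⟨V, W, hV, hW, hzV, hzW, hVW⟩ := isOpen_prod_iff.1 (hopen U hU) _ _ hzU
    obtain ⟨t, ht, htc, htVW⟩ := exists_mem_nhds_isClosed_subset <| Filter.inter_mem
      ((hV.preimage f₁.continuous).mem_nhds hzV) ((hW.preimage f₂.continuous).mem_nhds hzW)
    refine ⟨t, mem_nhdsWithin_of_mem_nhds ht, {p | p.1 ∈ t → p.2 ∈ V}, {p | p.1 ∈ t → p.2 ∈ W},
      isOpen_imp (htc.preimage continuous_fst) (hV.preimage continuous_snd),
      isOpen_imp (htc.preimage continuous_fst) (hW.preimage continuous_snd),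
      fun z hz => (htVW hz).1, fun z hz => (htVW hz).2,
      fun z hz => ⟨U, hU, fun x y hx hy => hVW ⟨hx hz, hy hz⟩⟩⟩

theorem dist_projIcc_add_le (x : I) (a : ℝ) :
    dist x (projIcc 0 1 zero_le_one (x + a)) ≤ |a| := by
  calc dist x (projIcc 0 1 zero_le_one (x + a))
      = dist (projIcc 0 1 zero_le_one (x : ℝ)) (projIcc 0 1 zero_le_one (x + a)) := by
        rw [projIcc_val]
    _ ≤ dist (x : ℝ) (x + a) := by
        simpa only [NNReal.coe_one, one_mul] using
          (LipschitzWith.projIcc (zero_le_one (α := ℝ))).dist_le_mul x (x + a)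
    _ = |a| := by rw [dist_self_add_right, Real.norm_eq_abs]

theorem finite_range_projIcc_intCast_div {k : ℕ} (hk : 0 < k) :
    (range fun j : ℤ => projIcc (0 : ℝ) 1 zero_le_one (j / k)).Finite := by
  refine ((finite_Icc (0 : ℤ) k).image fun j : ℤ => projIcc (0 : ℝ) 1 zero_le_one (j / k)).subset ?_
  rintro _ ⟨j, rfl⟩
  refine ⟨max 0 (min k j), by simp, ?_⟩
  rcases le_total j 0 with hj | hj
  · have hjk : (j / k : ℝ) ≤ 0 := div_nonpos_of_nonpos_of_nonneg (mod_cast hj) k.cast_nonneg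
    simp [hj, projIcc_of_le_left _ hjk]
  rcases le_total j k with hjk | hjk
  · simp [hj, hjk]
  · have hk' : (0 : ℝ) < k := Nat.cast_pos.2 hk
    have hjk' : (1 : ℝ) ≤ j / k := (one_le_div hk').2 (mod_cast hjk)
    simp [hjk, hk'.ne', projIcc_of_right_le _ hjk']

/-- The triangle wave of slope `±1` and period `2 / k` with zeros at the multiples of `1 / k`.
Where the slope is `±1`, shifting `x` by `∓ triangleWave k x` gives a multiple of `1 / k`. -/
noncomputable def triangleWave (k : ℕ) (x : ℝ) : ℝ :=
  Real.arcsin (Real.sin (k * Real.pi * x)) / (k * Real.pi)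

theorem continuous_triangleWave (k : ℕ) : Continuous (triangleWave k) := by
  unfold triangleWave
  fun_prop

theorem abs_triangleWave_lt {k : ℕ} (hk : 0 < k) (x : ℝ) : |triangleWave k x| < 1 / k := by
  have hk' : (0 : ℝ) < k := Nat.cast_pos.2 hk
  have harcsin : |Real.arcsin (Real.sin (k * Real.pi * x))| < Real.pi :=
    (abs_le.2 ⟨Real.neg_pi_div_two_le_arcsin _, Real.arcsin_le_pi_div_two _⟩).trans_lt
      (half_lt_self Real.pi_pos)
  calc |triangleWave k x|
      = |Real.arcsin (Real.sin (k * Real.pi * x))| / (k * Real.pi) := by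
        rw [triangleWave, abs_div, abs_of_pos (mul_pos hk' Real.pi_pos)]
    _ < Real.pi / (k * Real.pi) := div_lt_div_of_pos_right harcsin (mul_pos hk' Real.pi_pos)
    _ = 1 / k := by field_simp

theorem exists_int_sub_triangleWave_eq_or {k : ℕ} (hk : 0 < k) (x : ℝ) :
    ∃ j : ℤ, x - triangleWave k x = j / k ∨ x + triangleWave k x = j / k := by
  have hk' : (k : ℝ) ≠ 0 := Nat.cast_ne_zero.2 hk.ne'
  have hsin : Real.sin (k * Real.pi * triangleWave k x) = Real.sin (k * Real.pi * x) := by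
    rw [triangleWave, mul_div_cancel₀ _ (mul_ne_zero hk' Real.pi_ne_zero),
      Real.sin_arcsin (Real.neg_one_le_sin _) (Real.sin_le_one _)]
  obtain ⟨j, hj | hj⟩ := Real.sin_eq_sin_iff.1 hsin
  · refine ⟨2 * j, .inl ((eq_div_iff hk').2 (mul_right_cancel₀ Real.pi_ne_zero ?_))⟩
    push_cast
    linarith
  · refine ⟨2 * j + 1, .inr ((eq_div_iff hk').2 (mul_right_cancel₀ Real.pi_ne_zero ?_))⟩
    push_cast
    linarith

theorem exists_complementary_perturbations {ε : ℝ} (hε : 0 < ε) :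
    ∃ (g g' : C(I, I)) (G : Set I), G.Finite ∧ (∀ x, dist x (g x) < ε) ∧
      (∀ x, dist x (g' x) < ε) ∧ ∀ x, g x ∈ G ∨ g' x ∈ G := by
  obtain ⟨k, hk⟩ := exists_nat_one_div_lt hε
  let u (x : I) : ℝ := triangleWave (k + 1) x
  have hu : Continuous u := (continuous_triangleWave _).comp continuous_subtype_val
  have huε (x : I) : |u x| < ε := (abs_triangleWave_lt k.succ_pos x).trans (mod_cast hk)
  refine ⟨⟨fun x => projIcc 0 1 zero_le_one (x + -u x), continuous_projIcc.comp (by fun_prop)⟩,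
    ⟨fun x => projIcc 0 1 zero_le_one (x + u x), continuous_projIcc.comp (by fun_prop)⟩, _,
    finite_range_projIcc_intCast_div k.succ_pos,
    fun x => (dist_projIcc_add_le _ _).trans_lt (by simpa only [abs_neg] using huε x),
    fun x => (dist_projIcc_add_le _ _).trans_lt (huε x), fun x => ?_⟩
  obtain ⟨j, hj⟩ := exists_int_sub_triangleWave_eq_or k.succ_pos x
  exact hj.imp (fun h => ⟨j, congrArg _ (by rw [← h, sub_eq_add_neg])⟩)
    fun h => ⟨j, congrArg _ h.symm⟩

theorem IsHomotopicalZSet.exists_avoiding {X : Type} {ι : Type*} [TopologicalSpace X] [R1Space X]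
    [Fintype ι] {n : ℕ} {A : Set X} (hA : IsHomotopicalZSet n A) (hn : n ≤ Fintype.card ι)
    (f : C(ι → I, X)) {O : Set ((ι → I) × X)} (hO : IsOpen O) (hf : ∀ z, (z, f z) ∈ O) :
    ∃ ε > 0, ∀ g : C(I, I), (∀ x, dist x (g x) < ε) → ∀ G : Set I, G.Finite →
      ∃ f', HomotopicIn O f f' ∧ ∀ z : ι → I, {i | g (z i) ∉ G}.ncard ≤ n → f' z ∉ A := by
  obtain ⟨ε, hε, hfε⟩ := exists_homotopicIn_comp_of_dist_lt f hO hf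
  refine ⟨ε, hε, fun g hg G hG => ?_⟩
  let γ : C(ι → I, ι → I) := ⟨fun z i => g (z i), by fun_prop⟩
  have hfγ : HomotopicIn O f (f.comp γ) := hfε γ fun z => (dist_pi_lt_iff hε).2 fun i => hg (z i)
  have hskeleton : CanAvoidOn A (gridSkeleton n G : Set (ι → I)) :=
    .gridSkeleton hA.1 hn hA.canAvoidOn_univ hG
  obtain ⟨h, hγh, hh⟩ := hskeleton.exists_homotopicIn_comp f γ hO hfγ.right
  exact ⟨h.comp γ, hfγ.trans hγh, fun z hz => hh (γ z) hz⟩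

theorem ncard_le_or_ncard_le_of_disjoint {ι : Type*} [Fintype ι] {s t : Set ι}
    (hst : Disjoint s t) {n m : ℕ} (hι : Fintype.card ι ≤ n + m + 1) :
    s.ncard ≤ n ∨ t.ncard ≤ m := by
  have hunion := ncard_union_eq hst
  have hle := ncard_le_card (s ∪ t)
  rw [Nat.card_eq_fintype_card] at hle
  omega

theorem stmt17_general {X Y : Type} [TopologicalSpace X] [TopologicalSpace Y] [R1Space X]
    [R1Space Y] (n m : ℕ) (A : Set X) (B : Set Y) (hA : IsHomotopicalZSet n A)
    (hB : IsHomotopicalZSet m B) : IsHomotopicalZSet (n + m + 1) (A ×ˢ B) := by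
  refine ⟨hA.1.prod hB.1, fun 𝒰 hopen hcover f => ?_⟩
  obtain ⟨O₁, O₂, hO₁, hO₂, hfO₁, hfO₂, hO⟩ :=
    exists_isOpen_graph_prod_subset_cover (fst.comp f) (snd.comp f) hopen hcover
  obtain ⟨ε₁, hε₁, h₁⟩ := hA.exists_avoiding (by rw [Fintype.card_fin]; omega) (fst.comp f) hO₁ hfO₁
  obtain ⟨ε₂, hε₂, h₂⟩ := hB.exists_avoiding (by rw [Fintype.card_fin]; omega) (snd.comp f) hO₂ hfO₂
  obtain ⟨g, g', G, hG, hg, hg', hgG⟩ := exists_complementary_perturbations (lt_min hε₁ hε₂)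
  obtain ⟨f₁, ⟨H₁⟩, hf₁⟩ := h₁ g (fun x => (hg x).trans_le (min_le_left _ _)) G hG
  obtain ⟨f₂, ⟨H₂⟩, hf₂⟩ := h₂ g' (fun x => (hg' x).trans_le (min_le_right _ _)) G hG
  refine ⟨f₁.prodMk f₂, fun z hz => ?_, H₁.toHomotopy.prodMk H₂.toHomotopy, fun z => ?_⟩
  · have hdisj : Disjoint {i | g (z i) ∉ G} {i | g' (z i) ∉ G} :=
      disjoint_left.2 fun i hi hi' => (hgG (z i)).elim hi hi'
    exact (ncard_le_or_ncard_le_of_disjoint hdisj (Fintype.card_fin _).le).elim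
      (fun h => hf₁ z h hz.1) fun h => hf₂ z h hz.2
  · obtain ⟨U, hU, hOU⟩ := hO z
    exact ⟨U, hU, fun t => hOU _ _ (H₁.prop t z) (H₂.prop t z)⟩

/-- Multiplication theorem for homotopical `Z_n`-sets: if `A` is a homotopical `Z_n`-set in a
Tychonov space `X` and `B` is a homotopical `Z_m`-set in a Tychonov space `Y`, then `A × B` is
a homotopical `Z_{n+m+1}`-set in `X × Y`. -/
theorem stmt17 {X Y : Type} [TopologicalSpace X] [TopologicalSpace Y]
    [T35Space X] [T35Space Y] (n m : ℕ) (A : Set X) (B : Set Y)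
    (hA : IsHomotopicalZSet n A) (hB : IsHomotopicalZSet m B) :
    IsHomotopicalZSet (n + m + 1) (A ×ˢ B) :=
  stmt17_general n m A B hA hB
end
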